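/- arXiv:0909.2613 — 3 statements merged into one kernel-verified Lean document; each statement's English description precedes it below -/
import Mathlib

section
/- Let k ≥ 2 be an integer, let G be a graph, let L be a k-L(2,1)-labelling of G, and let v be a vertex of G of degree k−1. Then L(v) = 0 or L(v) = k. -/
/-- For an integer `k`, a `k`-L(2,1)-labelling of a graph `G` is a map from the vertices
to `{0,1,…,k}` such that labels of adjacent vertices differ by at least `2` and vertices
at distance exactly `2` get distinct labels. -/
def IsL21Labelling {V : Type*} (G : SimpleGraph V) (k : ℕ) (L : V → ℕ) : Prop :=
  (∀ v, L v ≤ k) ∧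
  (∀ x y, G.Adj x y → 2 ≤ |(L x : ℤ) - (L y : ℤ)|) ∧
  (∀ x y, G.dist x y = 2 → L x ≠ L y)

/-! Distinct neighbours of `v` are adjacent or at distance two, so they carry distinct labels, and
these labels all avoid `L v - 1`, `L v` and `L v + 1`. When `0 < L v < k` this leaves only `k - 2`
of the `k + 1` labels for the neighbours. -/

theorem dist_eq_two_iff {V : Type*} {G : SimpleGraph V} {x y : V} :
    G.dist x y = 2 ↔ x ≠ y ∧ ¬G.Adj x y ∧ (G.commonNeighbors x y).Nonempty := by
  rw [← SimpleGraph.edist_eq_two_iff, SimpleGraph.dist, ENat.toNat_eq_iff two_ne_zero,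
    Nat.cast_ofNat]

namespace IsL21Labelling

variable {V : Type*} {G : SimpleGraph V} {k : ℕ} {L : V → ℕ}

theorem add_two_le_or_add_two_le_of_adj (hL : IsL21Labelling G k L) {x y : V}
    (hxy : G.Adj x y) : L x + 2 ≤ L y ∨ L y + 2 ≤ L x := by
  have labels_apart := le_abs.mp (hL.2.1 x y hxy)
  omega

theorem injOn_neighborSet (hL : IsL21Labelling G k L) (v : V) :
    Set.InjOn L (G.neighborSet v) := by
  intro x hvx y hvy hlabel
  by_contra hne
  have hnadj : ¬G.Adj x y := fun hxy => by
    have labels_apart := hL.add_two_le_or_add_two_le_of_adj hxy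
    omega
  have hdist : G.dist x y = 2 := dist_eq_two_iff.mpr ⟨hne, hnadj, v, hvx.symm, hvy.symm⟩
  exact hL.2.2 x y hdist hlabel

theorem mapsTo_neighborSet (hL : IsL21Labelling G k L) (v : V) :
    Set.MapsTo L (G.neighborSet v)
      (Finset.range (L v - 1) ∪ Finset.Ioc (L v + 1) k : Finset ℕ) := by
  intro x hvx
  have label_le := hL.1 x
  have labels_apart := hL.add_two_le_or_add_two_le_of_adj hvx
  simp only [Finset.mem_coe, Finset.mem_union, Finset.mem_range, Finset.mem_Ioc]
  omega

/-- The truncated subtractions are intended: no label is below `L v - 1` when `L v = 0`, and none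
is above `L v + 1` when `L v = k`. -/
theorem degree_le (hL : IsL21Labelling G k L) (v : V) [Fintype (G.neighborSet v)] :
    G.degree v ≤ (L v - 1) + (k - (L v + 1)) :=
  calc
    G.degree v = (G.neighborFinset v).card := (G.card_neighborFinset_eq_degree v).symm
    _ ≤ (Finset.range (L v - 1) ∪ Finset.Ioc (L v + 1) k).card :=
      Finset.card_le_card_of_injOn L
        (by simpa only [SimpleGraph.coe_neighborFinset] using hL.mapsTo_neighborSet v)
        (by simpa only [SimpleGraph.coe_neighborFinset] using hL.injOn_neighborSet v)
    _ ≤ (Finset.range (L v - 1)).card + (Finset.Ioc (L v + 1) k).card :=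
      Finset.card_union_le _ _
    _ = (L v - 1) + (k - (L v + 1)) := by rw [Finset.card_range, Nat.card_Ioc]

end IsL21Labelling

theorem stmt_0_general {V : Type*} {G : SimpleGraph V} {k : ℕ} {L : V → ℕ}
    (hL : IsL21Labelling G k L) (v : V) [Fintype (G.neighborSet v)]
    (hv : k ≤ G.degree v + 1) : L v = 0 ∨ L v = k := by
  have label_le := hL.1 v
  have degree_le := hL.degree_le v
  omega

/-- If `k ≥ 2`, `L` is a `k`-L(2,1)-labelling of `G` and `v` has degree `k - 1`,
then `L v = 0` or `L v = k`. -/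
theorem stmt_0 {V : Type*} [Fintype V] (G : SimpleGraph V) [DecidableRel G.Adj]
    (k : ℕ) (hk : 2 ≤ k) (L : V → ℕ) (hL : IsL21Labelling G k L)
    (v : V) (hv : G.degree v = k - 1) :
    L v = 0 ∨ L v = k :=
  stmt_0_general hL v (by omega)
end

section
/- Let G be a graph with an almost two-coloured perfect matching, and let v_1, v_2, v_3, v_4 be four distinct vertices of G such that v_1v_2, v_2v_3, v_3v_4, v_4v_1 are all edges of G. Then exactly two of the four vertices v_1, v_2, v_3, v_4 are coloured black (and the other two white). -/
/-- An almost two-coloured perfect matching of `G`: a two-colouring (black/white,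
modelled by `Bool` with `true` = black) of the vertices in which every vertex of degree
at least two (i.e. having two distinct neighbours) has exactly one neighbour of the
same colour. -/
def IsAlmostTCPM {V : Type*} (G : SimpleGraph V) (c : V → Bool) : Prop :=
  ∀ v, (∃ w₁ w₂, w₁ ≠ w₂ ∧ G.Adj v w₁ ∧ G.Adj v w₂) →
    ∃! w, G.Adj v w ∧ c w = c v

/-!
Three of the four vertices of a four-cycle always form a path of length two. Such a path cannot be
monochromatic, as its middle vertex would have two neighbours of its own colour. Hence each of the
two colours occurs at most twice on the cycle, and so exactly twice.
-/

/-- A `1`-defective colouring of `G`, with colours in an arbitrary type: every vertex has at most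
one neighbour of its own colour. It isolates the uniqueness half of an almost two-coloured perfect
matching. -/
def IsOneDefective {V α : Type*} (G : SimpleGraph V) (c : V → α) : Prop :=
  ∀ v, {w | G.Adj v w ∧ c w = c v}.Subsingleton

theorem IsAlmostTCPM.isOneDefective {V : Type*} {G : SimpleGraph V} {c : V → Bool}
    (hc : IsAlmostTCPM G c) : IsOneDefective G c := by
  intro v w₁ hw₁ w₂ hw₂
  by_contra hne
  exact hne ((hc v ⟨w₁, w₂, hne, hw₁.1, hw₂.1⟩).unique hw₁ hw₂)

namespace IsOneDefective

variable {V α : Type*} {G : SimpleGraph V}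

theorem not_monochromatic_path {c : V → α} (hc : IsOneDefective G c) {u v w : V}
    (huv : G.Adj u v) (hvw : G.Adj v w) (huw : u ≠ w) (a : α) :
    ¬(c u = a ∧ c v = a ∧ c w = a) := by
  rintro ⟨hu, hv, hw⟩
  exact huw (hc v ⟨huv.symm, hu.trans hv.symm⟩ ⟨hvw, hw.trans hv.symm⟩)

theorem count_fourCycle_le_two [DecidableEq α] {c : V → α} (hc : IsOneDefective G c)
    {v₁ v₂ v₃ v₄ : V} (h13 : v₁ ≠ v₃) (h24 : v₂ ≠ v₄)
    (h12 : G.Adj v₁ v₂) (h23 : G.Adj v₂ v₃) (h34 : G.Adj v₃ v₄) (h41 : G.Adj v₄ v₁) (a : α) :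
    [c v₁, c v₂, c v₃, c v₄].count a ≤ 2 := by
  have path₁₂₃ := hc.not_monochromatic_path h12 h23 h13 a
  have path₂₃₄ := hc.not_monochromatic_path h23 h34 h24 a
  have path₃₄₁ := hc.not_monochromatic_path h34 h41 h13.symm a
  have path₄₁₂ := hc.not_monochromatic_path h41 h12 h24.symm a
  grind

end IsOneDefective

theorem stmt_2_general {V : Type*} {G : SimpleGraph V} {c : V → Bool}
    (hc : IsOneDefective G c) {v₁ v₂ v₃ v₄ : V} (h13 : v₁ ≠ v₃) (h24 : v₂ ≠ v₄)
    (h12 : G.Adj v₁ v₂) (h23 : G.Adj v₂ v₃) (h34 : G.Adj v₃ v₄) (h41 : G.Adj v₄ v₁) :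
    [c v₁, c v₂, c v₃, c v₄].count true = 2 := by
  have black_le := hc.count_fourCycle_le_two h13 h24 h12 h23 h34 h41 true
  have white_le := hc.count_fourCycle_le_two h13 h24 h12 h23 h34 h41 false
  have total : [c v₁, c v₂, c v₃, c v₄].count true + [c v₁, c v₂, c v₃, c v₄].count false = 4 :=
    List.count_true_add_count_false _
  lia

/-- If `G` has an almost two-coloured perfect matching and `v₁, v₂, v₃, v₄` are four
distinct vertices forming a four-cycle `v₁v₂, v₂v₃, v₃v₄, v₄v₁`, then exactly two of
them are coloured black (and the other two white). -/
theorem stmt_2 {V : Type*} (G : SimpleGraph V) (c : V → Bool)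
    (hc : IsAlmostTCPM G c) (v₁ v₂ v₃ v₄ : V)
    (hdist : [v₁, v₂, v₃, v₄].Pairwise (· ≠ ·))
    (h12 : G.Adj v₁ v₂) (h23 : G.Adj v₂ v₃) (h34 : G.Adj v₃ v₄) (h41 : G.Adj v₄ v₁) :
    [c v₁, c v₂, c v₃, c v₄].count true = 2 := by
  obtain ⟨h13, h24⟩ : v₁ ≠ v₃ ∧ v₂ ≠ v₄ := by simp_all
  exact stmt_2_general hc.isOneDefective h13 h24 h12 h23 h34 h41
end

section
/- Let G be a cubic graph (every vertex has degree three) and let H be the corresponding auxiliary graph. If G has a two-coloured perfect matching, then H has a good coloured orientation. -/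
/-- A two-coloured perfect matching of `G`: a two-colouring (black/white, modelled by
`Bool`) of the vertices in which every vertex has exactly one neighbour of the same
colour. -/
def IsTCPM {V : Type*} (G : SimpleGraph V) (c : V → Bool) : Prop :=
  ∀ v, ∃! w, G.Adj v w ∧ c w = c v

/-- `v` has degree three in `H`: it has exactly three distinct neighbours. -/
def HasDeg3 {W : Type*} (H : SimpleGraph W) (v : W) : Prop :=
  ∃ w₁ w₂ w₃, w₁ ≠ w₂ ∧ w₁ ≠ w₃ ∧ w₂ ≠ w₃ ∧
    H.Adj v w₁ ∧ H.Adj v w₂ ∧ H.Adj v w₃ ∧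
    ∀ w, H.Adj v w → w = w₁ ∨ w = w₂ ∨ w = w₃

/-- The potential vertices of the auxiliary graph `H` obtained from a graph `G`:
for every vertex `x` of `G` a vertex `orig x`, and for every edge `uv` of `G` the six
new vertices of the gadget replacing `uv`.  Here `dvert u v` denotes the gadget
neighbour of `u` on the edge `uv` (so `dvert u v` is the vertex `d` and `dvert v u`
is the vertex `o` of the gadget), while the vertices `i`, `j`, `in`, `out` of the
gadget on an edge `e` are `ivert e`, `jvert e`, `invert e`, `outvert e`. -/
inductive AuxV (V : Type*)
| orig (x : V)
| dvert (x y : V)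
| ivert (e : Sym2 V)
| jvert (e : Sym2 V)
| invert (e : Sym2 V)
| outvert (e : Sym2 V)

/-- The actual vertices of the auxiliary graph among the potential ones. -/
def AuxOk {V : Type*} (G : SimpleGraph V) : AuxV V → Prop
| .orig _ => True
| .dvert x y => G.Adj x y
| .ivert e => e ∈ G.edgeSet
| .jvert e => e ∈ G.edgeSet
| .invert e => e ∈ G.edgeSet
| .outvert e => e ∈ G.edgeSet

/-- The adjacency generating relation of the auxiliary graph: for each edge `uv` of
`G`, the gadget edges `u d`, `d i`, `d j`, `i o`, `j o`, `o v`, `i in`, `j out`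
(with `d = dvert u v` and `o = dvert v u`). -/
def AuxAdj {V : Type*} (G : SimpleGraph V) : AuxV V → AuxV V → Prop := fun a b =>
  (∃ x y, G.Adj x y ∧ a = .orig x ∧ b = .dvert x y) ∨
  (∃ x y, G.Adj x y ∧ a = .dvert x y ∧ b = .ivert s(x, y)) ∨
  (∃ x y, G.Adj x y ∧ a = .dvert x y ∧ b = .jvert s(x, y)) ∨
  (∃ e, e ∈ G.edgeSet ∧ a = .ivert e ∧ b = .invert e) ∨
  (∃ e, e ∈ G.edgeSet ∧ a = .jvert e ∧ b = .outvert e)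

/-- The vertex set of the auxiliary graph of `G`. -/
def AuxVert {V : Type*} (G : SimpleGraph V) : Type _ := {z : AuxV V // AuxOk G z}

/-- The auxiliary graph `H` of `G`. -/
def AuxGraph {V : Type*} (G : SimpleGraph V) : SimpleGraph (AuxVert G) :=
  SimpleGraph.fromRel (fun a b => AuxAdj G a.1 b.1)

/-- The outvertices of the auxiliary graph. -/
def IsOutV {V : Type*} (G : SimpleGraph V) (z : AuxVert G) : Prop :=
  ∃ e, z.1 = AuxV.outvert e

/-- `(col, orient)` is a coloured orientation of the graph `H` (with distinguished
outvertices given by `isOut`): a two-colouring `col` of the vertices together with an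
orientation `orient` of a subset of the edges (`orient x y` meaning that the edge `xy`
is oriented from `x` to `y`) such that: every vertex is adjacent to at most one vertex
of the opposite colour; an edge is oriented (in exactly one direction) if and only if
it is monochromatic; every vertex other than the outvertices has outdegree at most two
and indegree at most one; and every outvertex has indegree zero. -/
def IsColOrient {W : Type*} (H : SimpleGraph W) (isOut : W → Prop)
    (col : W → Bool) (orient : W → W → Prop) : Prop :=
  (∀ x y, orient x y → H.Adj x y) ∧
  (∀ x y, orient x y → ¬ orient y x) ∧
  (∀ x y, H.Adj x y → ((orient x y ∨ orient y x) ↔ col x = col y)) ∧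
  (∀ v w₁ w₂, H.Adj v w₁ → H.Adj v w₂ → col w₁ ≠ col v → col w₂ ≠ col v → w₁ = w₂) ∧
  (∀ v, ¬ isOut v → ∀ w₁ w₂ w₃, orient v w₁ → orient v w₂ → orient v w₃ →
    w₁ = w₂ ∨ w₁ = w₃ ∨ w₂ = w₃) ∧
  (∀ v, ¬ isOut v → ∀ w₁ w₂, orient w₁ v → orient w₂ v → w₁ = w₂) ∧
  (∀ v, isOut v → ∀ w, ¬ orient w v)

/-- A coloured orientation is good if every vertex of degree three is adjacent to
exactly one vertex of the opposite colour and has indegree exactly one and outdegree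
exactly one. -/
def IsGoodColOrient {W : Type*} (H : SimpleGraph W) (isOut : W → Prop)
    (col : W → Bool) (orient : W → W → Prop) : Prop :=
  IsColOrient H isOut col orient ∧
  ∀ v, HasDeg3 H v →
    (∃! w, H.Adj v w ∧ col w ≠ col v) ∧
    (∃! w, orient w v) ∧
    (∃! w, orient v w)

/-!
Deleting the monochromatic edges of `G` leaves a 2-regular bipartite graph, which has a perfect
matching by Hall's theorem.  Directing its matching edges from black to white and its other edges
from white to black gives every vertex one dichromatic edge in and one out; monochromatic edges are
directed arbitrarily.

Let `t → h` be a directed edge, with `d` and `o` the gadget vertices next to `t` and `h`.  In `H`,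
the original vertices keep their colours, `d` and `i` get the colour opposite to that of `h`, `o`
and `j` the colour opposite to that of `t`, and `in`, `out` the colours of `t`, `h`.  If `th` is
dichromatic, the monochromatic edges of the gadget form the paths `t → d → i → in` and
`out → j → o → h`; otherwise they form the cycle `d → i → o → j → d`.
-/

section GoodOrientation

variable {W : Type*} {H : SimpleGraph W} {col : W → Bool} {dir : W → W → Prop} {v : W}

/-- The partial orientation of `H` whose arcs are the monochromatic edges, directed by `dir`. -/
def monoOrient (H : SimpleGraph W) (col : W → Bool) (dir : W → W → Prop) (v w : W) : Prop :=
  H.Adj v w ∧ col v = col w ∧ dir v w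

/-- The condition that a good coloured orientation imposes at a vertex of degree three: one
neighbour of the opposite colour, indegree one and outdegree one. -/
def IsGoodAt (H : SimpleGraph W) (col : W → Bool) (orient : W → W → Prop) (v : W) : Prop :=
  (∃! w, H.Adj v w ∧ col w ≠ col v) ∧ (∃! w, orient w v) ∧ (∃! w, orient v w)

theorem isGoodAt_monoOrient (hdir : ∀ v w, H.Adj v w → (dir v w ↔ ¬ dir w v)) {p q r : W}
    (hadj : ∀ w, H.Adj v w ↔ w = p ∨ w = q ∨ w = r) (hp : col p ≠ col v)
    (hq : col q = col v) (hqv : dir q v) (hr : col r = col v) (hvr : dir v r) :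
    IsGoodAt H col (monoOrient H col dir) v := by
  have hvp : H.Adj v p := (hadj p).2 (by simp)
  have hvq : H.Adj v q := (hadj q).2 (by simp)
  have hvr' : H.Adj v r := (hadj r).2 (by simp)
  refine ⟨⟨p, ⟨hvp, hp⟩, ?_⟩, ⟨q, ⟨hvq.symm, hq, hqv⟩, ?_⟩, ⟨r, ⟨hvr', hr.symm, hvr⟩, ?_⟩⟩
  · rintro w ⟨hw, hcol⟩
    rcases (hadj w).1 hw with rfl | rfl | rfl
    exacts [rfl, absurd hq hcol, absurd hr hcol]
  · rintro w ⟨hw, hcol, hwv⟩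
    rcases (hadj w).1 hw.symm with rfl | rfl | rfl
    exacts [absurd hcol hp, rfl, absurd hwv ((hdir _ _ hvr').1 hvr)]
  · rintro w ⟨hw, hcol, hvw⟩
    rcases (hadj w).1 hw with rfl | rfl | rfl
    exacts [absurd hcol.symm hp, absurd hvw ((hdir _ _ hw.symm).1 hqv), rfl]

theorem HasDeg3.not_subsingleton_neighborSet (h : HasDeg3 H v) :
    ¬ (H.neighborSet v).Subsingleton := by
  obtain ⟨w₁, w₂, -, hne, -, -, h₁, h₂, -⟩ := h
  exact fun hs => hne (hs h₁ h₂)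

theorem isGoodColOrient_monoOrient {isOut : W → Prop}
    (hdir : ∀ v w, H.Adj v w → (dir v w ↔ ¬ dir w v))
    (hout : ∀ v, isOut v → ∀ w, ¬ dir w v)
    (hgood : ∀ v, (H.neighborSet v).Subsingleton ∨ IsGoodAt H col (monoOrient H col dir) v) :
    IsGoodColOrient H isOut col (monoOrient H col dir) := by
  refine ⟨⟨fun _ _ h => h.1, fun v w h h' => (hdir v w h.1).1 h.2.2 h'.2.2, ?_, ?_, ?_, ?_,
    fun v hv w h => hout v hv w h.2.2⟩,
    fun v hv => (hgood v).resolve_left hv.not_subsingleton_neighborSet⟩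
  · intro v w hvw
    constructor
    · rintro (h | h)
      exacts [h.2.1, h.2.1.symm]
    · intro hcol
      by_cases hd : dir v w
      · exact Or.inl ⟨hvw, hcol, hd⟩
      · exact Or.inr ⟨hvw.symm, hcol.symm, (hdir w v hvw.symm).2 hd⟩
  · intro v w₁ w₂ h₁ h₂ hc₁ hc₂
    rcases hgood v with hs | hg
    exacts [hs h₁ h₂, hg.1.unique ⟨h₁, hc₁⟩ ⟨h₂, hc₂⟩]
  · intro v _ w₁ w₂ _ h₁ h₂ _
    rcases hgood v with hs | hg
    exacts [Or.inl (hs h₁.1 h₂.1), Or.inl (hg.2.2.unique h₁ h₂)]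
  · intro v _ w₁ w₂ h₁ h₂
    rcases hgood v with hs | hg
    exacts [hs h₁.1.symm h₂.1.symm, hg.2.1.unique h₁ h₂]

end GoodOrientation

section RegularBipartite

open Finset in
theorem card_le_card_biUnion_neighborFinset {V : Type*} [DecidableEq V] {D : SimpleGraph V}
    [D.LocallyFinite] {d : ℕ} (hd : D.IsRegularOfDegree d) (hd0 : d ≠ 0) (s : Finset V) :
    #s ≤ #(s.biUnion fun x => D.neighborFinset x) := by
  classical
  refine Nat.le_of_mul_le_mul_right
    (card_mul_le_card_mul D.Adj (m := d) (n := d) (fun x hx => ?_) fun y _ => ?_)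
    (Nat.pos_of_ne_zero hd0)
  · rw [← hd x]
    refine card_le_card fun y hy => mem_filter.2 ⟨mem_biUnion.2 ⟨x, hx, hy⟩, ?_⟩
    exact (D.mem_neighborFinset x y).1 hy
  · rw [← hd y]
    exact card_le_card fun x hx => (D.mem_neighborFinset y x).2 (mem_filter.1 hx).2.symm

theorem exists_isPerfectMatching_of_isRegularOfDegree {V : Type*} {D : SimpleGraph V}
    [D.LocallyFinite] {p q : Set V} (hD : D.IsBipartiteWith p q) {d : ℕ}
    (hd : D.IsRegularOfDegree d) (hd0 : d ≠ 0) :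
    ∃ M : D.Subgraph, M.IsPerfectMatching := by
  classical
  refine SimpleGraph.exists_isPerfectMatching_of_forall_ncard_le hD fun s => ?_
  by_cases hs : s.Finite
  · lift s to Finset V using hs
    have h := card_le_card_biUnion_neighborFinset hd hd0 s
    rw [← Set.ncard_coe_finset, ← Set.ncard_coe_finset] at h
    simpa using h
  · simp [Set.Infinite.ncard hs]

end RegularBipartite

/-- A direction, from `tail` to `head`, for every unordered pair of vertices, whether or not it is
an edge of the graph under consideration. -/
structure EdgeOrientation (V : Type*) where
  tail : Sym2 V → V
  head : Sym2 V → V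
  mk_tail_head : ∀ e, s(tail e, head e) = e

namespace EdgeOrientation

variable {V : Type*} (θ : EdgeOrientation V) {x y : V}

theorem tail_head_eq_or (x y : V) :
    θ.tail s(x, y) = x ∧ θ.head s(x, y) = y ∨ θ.tail s(x, y) = y ∧ θ.head s(x, y) = x :=
  Sym2.eq_iff.1 (θ.mk_tail_head s(x, y))

theorem tail_eq_left_iff (h : x ≠ y) : θ.tail s(x, y) = x ↔ ¬ θ.tail s(x, y) = y := by
  grind [θ.tail_head_eq_or x y]

theorem head_eq_of_tail_eq (h : θ.tail s(x, y) = x) : θ.head s(x, y) = y := by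
  grind [θ.tail_head_eq_or x y]

theorem tail_swap_of_ne (h : θ.tail s(x, y) ≠ x) : θ.tail s(y, x) = y := by
  rw [Sym2.eq_swap]
  exact ((θ.tail_head_eq_or x y).resolve_left fun h' => h h'.1).1

theorem exists_tail_eq_of_rel (r : V → V → Prop) :
    ∃ θ : EdgeOrientation V, ∀ x y, r x y → ¬ r y x → θ.tail s(x, y) = x := by
  have hr : ∀ e : Sym2 V, ∃ x y, s(x, y) = e ∧ (r y x → r x y) := by
    refine Sym2.ind fun x y => ?_
    by_cases hxy : r x y
    · exact ⟨x, y, rfl, fun _ => hxy⟩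
    · exact ⟨y, x, Sym2.eq_swap, fun h => absurd h hxy⟩
  choose tail head heq hrel using hr
  let θ : EdgeOrientation V := ⟨tail, head, heq⟩
  refine ⟨θ, fun x y hxy hyx => ?_⟩
  rcases θ.tail_head_eq_or x y with h | ⟨ht, hh⟩
  · exact h.1
  · have := hrel s(x, y)
    grind

/-- Every vertex has one neighbour of its own colour, and two of the opposite colour, the edge
from one of which enters it while the edge to the other leaves it. -/
def IsBalanced (θ : EdgeOrientation V) (G : SimpleGraph V) (c : V → Bool) : Prop :=
  ∀ x, ∃ m a b, (∀ w, G.Adj x w ↔ w = m ∨ w = a ∨ w = b) ∧ c m = c x ∧ c a ≠ c x ∧ c b ≠ c x ∧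
    θ.tail s(a, x) = a ∧ θ.tail s(x, b) = x

end EdgeOrientation

section Cubic

variable {V : Type*} {G : SimpleGraph V} {c : V → Bool}

theorem IsTCPM.exists_neighbors (hc : IsTCPM G c) {x : V} (hx : HasDeg3 G x) :
    ∃ m a b, a ≠ b ∧ (∀ w, G.Adj x w ↔ w = m ∨ w = a ∨ w = b) ∧
      c m = c x ∧ c a ≠ c x ∧ c b ≠ c x := by
  obtain ⟨w₁, w₂, w₃, h₁₂, h₁₃, h₂₃, hw₁, hw₂, hw₃, hall⟩ := hx
  obtain ⟨m, ⟨hm, hcm⟩, huniq⟩ := hc x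
  have hne : ∀ w, G.Adj x w → w ≠ m → c w ≠ c x := fun w hw hwm hcw => hwm (huniq w ⟨hw, hcw⟩)
  rcases hall m hm with rfl | rfl | rfl
  · exact ⟨m, w₂, w₃, h₂₃, by grind, hcm, hne _ hw₂ h₁₂.symm, hne _ hw₃ h₁₃.symm⟩
  · exact ⟨m, w₁, w₃, h₁₃, by grind, hcm, hne _ hw₁ h₁₂, hne _ hw₃ h₂₃.symm⟩
  · exact ⟨m, w₁, w₂, h₁₂, by grind, hcm, hne _ hw₁ h₁₃, hne _ hw₂ h₂₃⟩

/-- The spanning subgraph of the dichromatic edges of a coloured graph. -/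
def dichromaticGraph (G : SimpleGraph V) (c : V → Bool) : SimpleGraph V :=
  G ⊓ (⊤ : SimpleGraph Bool).comap c

theorem dichromaticGraph_adj {x y : V} :
    (dichromaticGraph G c).Adj x y ↔ G.Adj x y ∧ c x ≠ c y := Iff.rfl

theorem isBipartiteWith_dichromaticGraph (G : SimpleGraph V) (c : V → Bool) :
    (dichromaticGraph G c).IsBipartiteWith {x | c x = true} {x | c x = false} where
  disjoint := Set.disjoint_left.2 fun x hx hx' => by simp_all
  mem_of_adj x y h := by
    have := h.2
    cases hx : c x <;> cases hy : c y <;> simp_all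

theorem IsTCPM.ncard_neighborSet_dichromaticGraph (hc : IsTCPM G c) {x : V}
    (hx : HasDeg3 G x) : ((dichromaticGraph G c).neighborSet x).ncard = 2 := by
  obtain ⟨m, a, b, hab, hadj, hm, ha, hb⟩ := hc.exists_neighbors hx
  have hset : (dichromaticGraph G c).neighborSet x = {a, b} := by
    ext w
    rw [SimpleGraph.mem_neighborSet, dichromaticGraph_adj, hadj]
    grind
  rw [hset, Set.ncard_pair hab]

theorem IsTCPM.exists_isPerfectMatching_dichromaticGraph (hc : IsTCPM G c)
    (hG : ∀ v, HasDeg3 G v) :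
    ∃ M : (dichromaticGraph G c).Subgraph, M.IsPerfectMatching := by
  have hcard := fun x => hc.ncard_neighborSet_dichromaticGraph (hG x)
  let _ : (dichromaticGraph G c).LocallyFinite := fun x =>
    (Set.finite_of_ncard_ne_zero (by rw [hcard x]; decide)).fintype
  refine exists_isPerfectMatching_of_isRegularOfDegree (isBipartiteWith_dichromaticGraph G c)
    (d := 2) (fun x => ?_) two_ne_zero
  rw [← hcard x, Set.ncard_eq_toFinset_card', ← SimpleGraph.card_neighborFinset_eq_degree]
  rfl

theorem IsTCPM.exists_neighbors_of_isPerfectMatching (hc : IsTCPM G c)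
    {M : (dichromaticGraph G c).Subgraph} (hM : M.IsPerfectMatching) {x : V}
    (hx : HasDeg3 G x) :
    ∃ m a b, (∀ w, G.Adj x w ↔ w = m ∨ w = a ∨ w = b) ∧ c m = c x ∧ c a ≠ c x ∧ c b ≠ c x ∧
      M.Adj x a ∧ ¬ M.Adj x b := by
  obtain ⟨m, a, b, hab, hadj, hm, ha, hb⟩ := hc.exists_neighbors hx
  obtain ⟨n, hn, huniq⟩ := SimpleGraph.Subgraph.isPerfectMatching_iff.1 hM x
  obtain ⟨hxn, hcol⟩ := dichromaticGraph_adj.1 hn.adj_sub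
  rcases (hadj n).1 hxn with rfl | rfl | rfl
  · exact absurd hm.symm hcol
  · exact ⟨m, n, b, hadj, hm, ha, hb, hn, fun h => hab (huniq b h).symm⟩
  · exact ⟨m, n, a, fun w => by rw [hadj, or_comm (a := w = n)], hm, hb, ha, hn,
      fun h => hab (huniq a h)⟩

theorem IsTCPM.exists_isBalanced (hc : IsTCPM G c) (hG : ∀ v, HasDeg3 G v) :
    ∃ θ : EdgeOrientation V, θ.IsBalanced G c := by
  obtain ⟨M, hM⟩ := hc.exists_isPerfectMatching_dichromaticGraph hG
  -- Matching edges are directed out of `true`, the other dichromatic edges out of `false`.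
  obtain ⟨θ, hθ⟩ := EdgeOrientation.exists_tail_eq_of_rel fun x y => (c x = true ↔ M.Adj x y)
  have htail : ∀ x y, c x ≠ c y → (c x = true ↔ M.Adj x y) → θ.tail s(x, y) = x := by
    intro x y hcol hxy
    refine hθ x y hxy fun hyx => hcol ?_
    rw [Bool.eq_iff_iff, hxy, hyx, M.adj_comm]
  refine ⟨θ, fun x => ?_⟩
  obtain ⟨m, a, b, hadj, hm, ha, hb, hxa, hxb⟩ :=
    hc.exists_neighbors_of_isPerfectMatching hM (hG x)
  cases hx : c x
  · refine ⟨m, a, b, hadj, by grind, by grind, by grind, htail a x ha ?_, htail x b hb.symm ?_⟩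
    · simp_all [M.adj_comm]
    · simp_all
  · refine ⟨m, b, a, by grind, by grind, by grind, by grind, htail b x hb ?_,
      htail x a ha.symm ?_⟩
    · simp_all [M.adj_comm]
    · simp_all

end Cubic

namespace AuxVert

variable {V : Type*} {G : SimpleGraph V} {x y : V}

/-- The vertex `x` of `G` as a vertex of the auxiliary graph. -/
def orig (x : V) : AuxVert G := ⟨.orig x, trivial⟩

/-- The gadget neighbour of `x` on the edge `xy`. -/
def dvert (h : G.Adj x y) : AuxVert G := ⟨.dvert x y, h⟩

/-- The vertex `i` of the gadget on the edge `xy`. -/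
def ivert (h : G.Adj x y) : AuxVert G := ⟨.ivert s(x, y), h⟩

/-- The vertex `j` of the gadget on the edge `xy`. -/
def jvert (h : G.Adj x y) : AuxVert G := ⟨.jvert s(x, y), h⟩

/-- The invertex of the gadget on the edge `xy`. -/
def invert (h : G.Adj x y) : AuxVert G := ⟨.invert s(x, y), h⟩

/-- The outvertex of the gadget on the edge `xy`. -/
def outvert (h : G.Adj x y) : AuxVert G := ⟨.outvert s(x, y), h⟩

@[simp] theorem val_orig (x : V) : (orig x : AuxVert G).1 = .orig x := rfl

@[simp] theorem val_dvert (h : G.Adj x y) : (dvert h).1 = .dvert x y := rfl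

@[simp] theorem val_ivert (h : G.Adj x y) : (ivert h).1 = .ivert s(x, y) := rfl

@[simp] theorem val_jvert (h : G.Adj x y) : (jvert h).1 = .jvert s(x, y) := rfl

@[simp] theorem val_invert (h : G.Adj x y) : (invert h).1 = .invert s(x, y) := rfl

@[simp] theorem val_outvert (h : G.Adj x y) : (outvert h).1 = .outvert s(x, y) := rfl

theorem ext_iff {v w : AuxVert G} : v = w ↔ v.1 = w.1 := Subtype.ext_iff

theorem eq_orig_or_exists_adj (v : AuxVert G) :
    (∃ x, v = orig x) ∨ ∃ (x y : V) (h : G.Adj x y),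
      v = dvert h ∨ v = ivert h ∨ v = jvert h ∨ v = invert h ∨ v = outvert h := by
  rcases v with ⟨x | ⟨x, y⟩ | ⟨⟨x, y⟩⟩ | ⟨⟨x, y⟩⟩ | ⟨⟨x, y⟩⟩ | ⟨⟨x, y⟩⟩, h⟩
  exacts [.inl ⟨x, rfl⟩, .inr ⟨x, y, h, .inl rfl⟩, .inr ⟨x, y, h, .inr (.inl rfl)⟩,
    .inr ⟨x, y, h, .inr (.inr (.inl rfl))⟩, .inr ⟨x, y, h, .inr (.inr (.inr (.inl rfl)))⟩,
    .inr ⟨x, y, h, .inr (.inr (.inr (.inr rfl)))⟩]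

theorem ivert_symm (h : G.Adj x y) : ivert h.symm = ivert h :=
  Subtype.ext (congrArg AuxV.ivert Sym2.eq_swap)

theorem jvert_symm (h : G.Adj x y) : jvert h.symm = jvert h :=
  Subtype.ext (congrArg AuxV.jvert Sym2.eq_swap)

end AuxVert

section Gadget

variable {V : Type*} {G : SimpleGraph V} {c : V → Bool} {θ : EdgeOrientation V}

/-- The colouring of the auxiliary graph. For an edge directed by `θ`, the vertices `in`, `out`
have the colours of its tail and head, and `i`, `j` those of the gadget neighbours of its tail
and head. -/
def auxColor (c : V → Bool) (θ : EdgeOrientation V) : AuxV V → Bool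
  | .orig x => c x
  | .dvert _ y => !c y
  | .ivert e => !c (θ.head e)
  | .jvert e => !c (θ.tail e)
  | .invert e => c (θ.tail e)
  | .outvert e => c (θ.head e)

/-- The directions of the edges of the auxiliary graph: every gadget is traversed from the tail of
its edge to the head, except that the path `d j o` is traversed backwards when the edge is
monochromatic, and that `d j` is directed towards `d` when it is not. -/
def AuxDir (c : V → Bool) (θ : EdgeOrientation V) : AuxV V → AuxV V → Prop
  | .orig _, .dvert x y => θ.tail s(x, y) = x
  | .dvert x y, .orig _ => θ.tail s(x, y) = y
  | .dvert x y, .ivert _ => θ.tail s(x, y) = x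
  | .ivert _, .dvert x y => θ.tail s(x, y) = y
  | .dvert x y, .jvert _ => θ.tail s(x, y) = y ∧ c x = c y
  | .jvert _, .dvert x y => θ.tail s(x, y) = y → c x ≠ c y
  | .ivert _, .invert _ => True
  | .outvert _, .jvert _ => True
  | _, _ => False

theorem auxDir_iff_not_of_auxAdj {a b : AuxV V} (h : AuxAdj G a b) :
    AuxDir c θ a b ↔ ¬ AuxDir c θ b a := by
  rcases h with ⟨x, y, h, rfl, rfl⟩ | ⟨x, y, h, rfl, rfl⟩ | ⟨x, y, -, rfl, rfl⟩ |
    ⟨e, -, rfl, rfl⟩ | ⟨e, -, rfl, rfl⟩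
  · exact θ.tail_eq_left_iff h.ne
  · exact θ.tail_eq_left_iff h.ne
  · simp [AuxDir]
  · simp [AuxDir]
  · simp [AuxDir]

theorem auxGraph_adj {v w : AuxVert G} :
    (AuxGraph G).Adj v w ↔ AuxAdj G v.1 w.1 ∨ AuxAdj G w.1 v.1 := by
  refine (SimpleGraph.fromRel_adj _ _ _).trans (and_iff_right_of_imp ?_)
  rintro h rfl
  simp only [or_self, AuxAdj] at h
  grind

theorem auxDir_iff_not {v w : AuxVert G} (h : (AuxGraph G).Adj v w) :
    AuxDir c θ v.1 w.1 ↔ ¬ AuxDir c θ w.1 v.1 := by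
  rcases auxGraph_adj.1 h with h | h
  · exact auxDir_iff_not_of_auxAdj h
  · rw [auxDir_iff_not_of_auxAdj h, not_not]

theorem auxGraph_adj_orig {x : V} {w : AuxVert G} :
    (AuxGraph G).Adj (.orig x) w ↔ ∃ (y : V) (h : G.Adj x y), w = .dvert h := by
  simp [auxGraph_adj, AuxAdj, AuxVert.ext_iff]

theorem auxGraph_adj_dvert {x y : V} (h : G.Adj x y) {w : AuxVert G} :
    (AuxGraph G).Adj (.dvert h) w ↔ w = .orig x ∨ w = .ivert h ∨ w = .jvert h := by
  simp only [auxGraph_adj, AuxAdj, AuxVert.ext_iff,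
    AuxVert.val_orig, AuxVert.val_dvert, AuxVert.val_ivert, AuxVert.val_jvert]
  grind

theorem auxGraph_adj_ivert {x y : V} (h : G.Adj x y) {w : AuxVert G} :
    (AuxGraph G).Adj (.ivert h) w ↔ w = .dvert h ∨ w = .dvert h.symm ∨ w = .invert h := by
  simp only [auxGraph_adj, AuxAdj, AuxVert.ext_iff,
    AuxVert.val_dvert, AuxVert.val_ivert, AuxVert.val_invert]
  grind [G.adj_comm, SimpleGraph.mem_edgeSet]

theorem auxGraph_adj_jvert {x y : V} (h : G.Adj x y) {w : AuxVert G} :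
    (AuxGraph G).Adj (.jvert h) w ↔ w = .dvert h ∨ w = .dvert h.symm ∨ w = .outvert h := by
  simp only [auxGraph_adj, AuxAdj, AuxVert.ext_iff,
    AuxVert.val_dvert, AuxVert.val_jvert, AuxVert.val_outvert]
  grind [G.adj_comm, SimpleGraph.mem_edgeSet]

theorem auxGraph_adj_invert {x y : V} (h : G.Adj x y) {w : AuxVert G} :
    (AuxGraph G).Adj (.invert h) w ↔ w = .ivert h := by
  simp only [auxGraph_adj, AuxAdj, AuxVert.ext_iff,
    AuxVert.val_ivert, AuxVert.val_invert]
  grind [SimpleGraph.mem_edgeSet]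

theorem auxGraph_adj_outvert {x y : V} (h : G.Adj x y) {w : AuxVert G} :
    (AuxGraph G).Adj (.outvert h) w ↔ w = .jvert h := by
  simp only [auxGraph_adj, AuxAdj, AuxVert.ext_iff,
    AuxVert.val_jvert, AuxVert.val_outvert]
  grind [SimpleGraph.mem_edgeSet]

/-- Goodness at a vertex of the auxiliary graph, for the colouring `auxColor` and the orientation
of the monochromatic edges by `AuxDir`. -/
def IsAuxGoodAt (c : V → Bool) (θ : EdgeOrientation V) (v : AuxVert G) : Prop :=
  IsGoodAt (AuxGraph G) (fun v => auxColor c θ v.1)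
    (monoOrient (AuxGraph G) (fun v => auxColor c θ v.1) fun v w => AuxDir c θ v.1 w.1) v

theorem isAuxGoodAt_of_adj_iff {v : AuxVert G} (p q r : AuxVert G)
    (hadj : ∀ w, (AuxGraph G).Adj v w ↔ w = p ∨ w = q ∨ w = r)
    (hp : auxColor c θ p.1 ≠ auxColor c θ v.1)
    (hq : auxColor c θ q.1 = auxColor c θ v.1) (hqv : AuxDir c θ q.1 v.1)
    (hr : auxColor c θ r.1 = auxColor c θ v.1) (hvr : AuxDir c θ v.1 r.1) :
    IsAuxGoodAt c θ v :=
  isGoodAt_monoOrient (fun _ _ => auxDir_iff_not) hadj hp hq hqv hr hvr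

theorem EdgeOrientation.IsBalanced.isAuxGoodAt_orig (hθ : θ.IsBalanced G c) (x : V) :
    IsAuxGoodAt c θ (.orig x : AuxVert G) := by
  obtain ⟨m, a, b, hadj, hm, ha, hb, hax, hxb⟩ := hθ x
  have hxm : G.Adj x m := (hadj m).2 (by simp)
  have hxa : G.Adj x a := (hadj a).2 (by simp)
  have hxb' : G.Adj x b := (hadj b).2 (by simp)
  rw [Sym2.eq_swap] at hax
  refine isAuxGoodAt_of_adj_iff (.dvert hxm) (.dvert hxa) (.dvert hxb') (fun w => ?_)
    ?_ ?_ ?_ ?_ ?_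
  · simp only [auxGraph_adj_orig, AuxVert.ext_iff, AuxVert.val_dvert, exists_prop, hadj]
    grind
  all_goals simp [auxColor, AuxDir, *, Bool.eq_not.2 ha, Bool.eq_not.2 hb]

theorem isAuxGoodAt_dvert {x y : V} (h : G.Adj x y) : IsAuxGoodAt c θ (.dvert h) := by
  have hadj := fun w => auxGraph_adj_dvert h (w := w)
  rcases θ.tail_head_eq_or x y with ⟨ht, hh⟩ | ⟨ht, hh⟩ <;> by_cases hc : c x = c y
  · refine isAuxGoodAt_of_adj_iff (.orig x) (.jvert h) (.ivert h) (by grind) ?_ ?_ ?_ ?_ ?_ <;>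
      simp [auxColor, AuxDir, *, h.ne]
  · refine isAuxGoodAt_of_adj_iff (.jvert h) (.orig x) (.ivert h) (by grind) ?_ ?_ ?_ ?_ ?_ <;>
      simp [auxColor, AuxDir, *, Bool.eq_not.2 hc]
  · refine isAuxGoodAt_of_adj_iff (.orig x) (.ivert h) (.jvert h) (by grind) ?_ ?_ ?_ ?_ ?_ <;>
      simp [auxColor, AuxDir, *]
  · refine isAuxGoodAt_of_adj_iff (.ivert h) (.jvert h) (.orig x) (by grind) ?_ ?_ ?_ ?_ ?_ <;>
      simp [auxColor, AuxDir, *, Bool.eq_not.2 hc]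

theorem isAuxGoodAt_ivert {x y : V} (h : G.Adj x y) : IsAuxGoodAt c θ (.ivert h) := by
  wlog ht : θ.tail s(x, y) = x generalizing x y
  · rw [← AuxVert.ivert_symm]
    exact this h.symm (θ.tail_swap_of_ne ht)
  have hadj := fun w => auxGraph_adj_ivert h (w := w)
  have hh := θ.head_eq_of_tail_eq ht
  have ht' : θ.tail s(y, x) = x := Sym2.eq_swap ▸ ht
  by_cases hc : c x = c y
  · refine isAuxGoodAt_of_adj_iff (.invert h) (.dvert h) (.dvert h.symm) (by grind)
      ?_ ?_ ?_ ?_ ?_ <;> simp [auxColor, AuxDir, *]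
  · refine isAuxGoodAt_of_adj_iff (.dvert h.symm) (.dvert h) (.invert h) (by grind)
      ?_ ?_ ?_ ?_ ?_ <;> simp [auxColor, AuxDir, *, Bool.eq_not.2 hc]

theorem isAuxGoodAt_jvert {x y : V} (h : G.Adj x y) : IsAuxGoodAt c θ (.jvert h) := by
  wlog ht : θ.tail s(x, y) = x generalizing x y
  · rw [← AuxVert.jvert_symm]
    exact this h.symm (θ.tail_swap_of_ne ht)
  have hadj := fun w => auxGraph_adj_jvert h (w := w)
  have hh := θ.head_eq_of_tail_eq ht
  have ht' : θ.tail s(y, x) = x := Sym2.eq_swap ▸ ht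
  by_cases hc : c x = c y
  · refine isAuxGoodAt_of_adj_iff (.outvert h) (.dvert h.symm) (.dvert h) (by grind)
      ?_ ?_ ?_ ?_ ?_ <;> simp [auxColor, AuxDir, *, h.ne]
  · refine isAuxGoodAt_of_adj_iff (.dvert h) (.outvert h) (.dvert h.symm) (by grind)
      ?_ ?_ ?_ ?_ ?_ <;> simp [auxColor, AuxDir, *, Bool.eq_not.2 hc]

theorem EdgeOrientation.IsBalanced.subsingleton_or_isAuxGoodAt (hθ : θ.IsBalanced G c)
    (v : AuxVert G) : ((AuxGraph G).neighborSet v).Subsingleton ∨ IsAuxGoodAt c θ v := by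
  rcases v.eq_orig_or_exists_adj with ⟨x, rfl⟩ | ⟨x, y, h, rfl | rfl | rfl | rfl | rfl⟩
  · exact Or.inr (hθ.isAuxGoodAt_orig x)
  · exact Or.inr (isAuxGoodAt_dvert h)
  · exact Or.inr (isAuxGoodAt_ivert h)
  · exact Or.inr (isAuxGoodAt_jvert h)
  · exact Or.inl fun w₁ h₁ w₂ h₂ =>
      ((auxGraph_adj_invert h).1 h₁).trans ((auxGraph_adj_invert h).1 h₂).symm
  · exact Or.inl fun w₁ h₁ w₂ h₂ =>
      ((auxGraph_adj_outvert h).1 h₁).trans ((auxGraph_adj_outvert h).1 h₂).symm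

theorem not_auxDir_of_isOutV {v : AuxVert G} (hv : IsOutV G v) (w : AuxVert G) :
    ¬ AuxDir c θ w.1 v.1 := by
  obtain ⟨e, he⟩ := hv
  rw [he]
  cases w.1 <;> exact id

end Gadget

/-- If a cubic graph `G` has a two-coloured perfect matching, then the corresponding
auxiliary graph `H` has a good coloured orientation. -/
theorem stmt_14 {V : Type*} (G : SimpleGraph V) (hcubic : ∀ v, HasDeg3 G v)
    (c : V → Bool) (hc : IsTCPM G c) :
    ∃ (col : AuxVert G → Bool) (orient : AuxVert G → AuxVert G → Prop),
      IsGoodColOrient (AuxGraph G) (IsOutV G) col orient := by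
  obtain ⟨θ, hθ⟩ := hc.exists_isBalanced hcubic
  exact ⟨_, _, isGoodColOrient_monoOrient (fun _ _ => auxDir_iff_not)
    (fun _ hv w => not_auxDir_of_isOutV hv w) hθ.subsingleton_or_isAuxGoodAt⟩
end
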